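/- Let A ∈ ℝ^{2n×2k} have full column rank. A decomposition A = Ŝ R̂ exists and is unique, where Ŝ ∈ ℝ^{2n×2k} is a perfect shuffle permuted symplectic (PSPS) matrix (i.e., Ŝ^T J_{2n} Ŝ = Ĵ_{2k}) and R̂ ∈ ℝ^{2k×2k} is block upper triangular with 2×2 blocks R̂_{ij} (1 ≤ i ≤ j ≤ k) whose diagonal blocks R̂_{jj} are diagonal with diagonal entries ordered nonincreasingly and having the same positive absolute value, if and only if all leading principal minors of even dimension of A^T J_{2n} A are nonzero, i.e., det((A^T J_{2n} A)_{1:2j,1:2j}) ≠ 0 for j = 1, …, k. -/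

import Mathlib

/-!
Put `M = Aᵀ J A`, a skew-symmetric matrix. If `A = S R` with `S` PSPS, then `M = Rᵀ Ĵ R`;
conversely, if `M = Rᵀ Ĵ R` with `R` invertible, then `S = A R⁻¹` is PSPS, and it is the only
possible first factor. So the theorem is about the Cholesky-like factorization `M = Rᵀ Ĵ R` with
`R` in the prescribed class of block upper triangular matrices, all of which are invertible.

Peeling off the last block row and column, `R = [[R', X], [0, T]]` and `M = [[M', B], [-Bᵀ, D]]`,
the equation `M = Rᵀ Ĵ R` says that `M' = R'ᵀ Ĵ R'`, that `R'ᵀ Ĵ X = B` (which determines `X`), and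
that `Tᵀ J₂ T = D - Xᵀ Ĵ X`. The right-hand side of the last equation is a skew-symmetric `2 × 2`
matrix `s J₂`, and the equation has exactly one admissible solution `T` when `s ≠ 0`
(`existsUnique_diagBlock`). If `det M ≠ 0` then `s ≠ 0`, for otherwise `M` would be
`Rᵀ (Ĵ ⊕ 0) R` with a singular middle factor. Induction on the number of blocks gives
`existsUnique_factor`. In the other direction the leading blocks of `Rᵀ Ĵ R` have the same form,
hence nonzero determinant (`det_leadSub_ne_zero`).
-/

open Matrix

noncomputable section

/-- The Poisson matrix `J_{2m} = [[0, I_m], [-I_m, 0]]`. -/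
def PoissonJ (m : ℕ) : Matrix (Fin (2 * m)) (Fin (2 * m)) ℝ :=
  Matrix.of fun i j =>
    if (j : ℕ) = (i : ℕ) + m then (1 : ℝ)
    else if (i : ℕ) = (j : ℕ) + m then -1 else 0

/-- The symplectic Stiefel manifold `Sp(2k, 2n)`. -/
def SpStiefel (k n : ℕ) : Set (Matrix (Fin (2 * n)) (Fin (2 * k)) ℝ) :=
  {X | Xᵀ * PoissonJ n * X = PoissonJ k}

/-- The `j × j` leading principal submatrix of a square matrix. -/
def leadSub {m : ℕ} (M : Matrix (Fin m) (Fin m) ℝ) (j : ℕ) (h : j ≤ m) :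
    Matrix (Fin j) (Fin j) ℝ :=
  M.submatrix (Fin.castLE h) (Fin.castLE h)

/-- The index `2j-1` (1-indexed), i.e. `2j` (0-indexed), of the `j`-th `2×2` diagonal block. -/
def idxA {k : ℕ} (j : Fin k) : Fin (2 * k) := ⟨2 * (j : ℕ), by have := j.isLt; omega⟩

/-- The index `2j` (1-indexed), i.e. `2j+1` (0-indexed), of the `j`-th `2×2` diagonal block. -/
def idxB {k : ℕ} (j : Fin k) : Fin (2 * k) := ⟨2 * (j : ℕ) + 1, by have := j.isLt; omega⟩

/-- `Ĵ_{2k} = diag(J_2, …, J_2)`, the block diagonal matrix with `k` copies of `J_2`. -/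
def hatJ (k : ℕ) : Matrix (Fin (2 * k)) (Fin (2 * k)) ℝ :=
  Matrix.of fun i j =>
    if (j : ℕ) = (i : ℕ) + 1 ∧ (i : ℕ) % 2 = 0 then (1 : ℝ)
    else if (i : ℕ) = (j : ℕ) + 1 ∧ (j : ℕ) % 2 = 0 then -1 else 0

/-! ### Admissible factors and block splitting -/

/-- The class of admissible second factors: block upper triangular matrices with `2 × 2` blocks
whose diagonal blocks are `diag(a, b)` with `b ≤ a`, `0 < a` and `|b| = a`. -/
def AdmissibleR (k : ℕ) (R : Matrix (Fin (2 * k)) (Fin (2 * k)) ℝ) : Prop :=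
  (∀ i j : Fin (2 * k), (j : ℕ) / 2 < (i : ℕ) / 2 → R i j = 0) ∧
  (∀ j : Fin k,
    R (idxA j) (idxB j) = 0 ∧
    R (idxB j) (idxA j) = 0 ∧
    R (idxB j) (idxB j) ≤ R (idxA j) (idxA j) ∧
    0 < R (idxA j) (idxA j) ∧
    |R (idxB j) (idxB j)| = R (idxA j) (idxA j))

/-- The condition on a single `2 × 2` diagonal block of an admissible second factor. -/
def AdmissibleBlock (T : Matrix (Fin 2) (Fin 2) ℝ) : Prop :=
  T 0 1 = 0 ∧ T 1 0 = 0 ∧ T 1 1 ≤ T 0 0 ∧ 0 < T 0 0 ∧ |T 1 1| = T 0 0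

/-- The splitting of the first `2 (k + 1)` indices into the first `2 k` and the last two. It relies
on `2 * (k + 1)` and `2 * k + 2` being definitionally equal. -/
def splitLast (k : ℕ) : Fin (2 * k) ⊕ Fin 2 ≃ Fin (2 * (k + 1)) :=
  (finSumFinEquiv : Fin (2 * k) ⊕ Fin 2 ≃ Fin (2 * k + 2))

/-- The `2 × 2` Poisson matrix. -/
def J2 : Matrix (Fin 2) (Fin 2) ℝ := !![0, 1; -1, 0]

/-- The matrix of size `2 (k + 1)` assembled from blocks of sizes `2 k` and `2`. -/
def assemble {k : ℕ} (P : Matrix (Fin (2 * k)) (Fin (2 * k)) ℝ) (Q : Matrix (Fin (2 * k)) (Fin 2) ℝ)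
    (U : Matrix (Fin 2) (Fin (2 * k)) ℝ) (V : Matrix (Fin 2) (Fin 2) ℝ) :
    Matrix (Fin (2 * (k + 1))) (Fin (2 * (k + 1))) ℝ :=
  (fromBlocks P Q U V).submatrix (splitLast k).symm (splitLast k).symm

lemma splitLast_inl {k : ℕ} (i : Fin (2 * k)) : (splitLast k (Sum.inl i) : ℕ) = i := by
  rfl

lemma splitLast_inr {k : ℕ} (i : Fin 2) : (splitLast k (Sum.inr i) : ℕ) = 2 * k + i := by
  rfl

/-! ### Block matrix calculus -/

section assemble

variable {k : ℕ} (P P' : Matrix (Fin (2 * k)) (Fin (2 * k)) ℝ) (Q Q' : Matrix (Fin (2 * k)) (Fin 2) ℝ)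
    (U U' : Matrix (Fin 2) (Fin (2 * k)) ℝ) (V V' : Matrix (Fin 2) (Fin 2) ℝ)

lemma exists_assemble (M : Matrix (Fin (2 * (k + 1))) (Fin (2 * (k + 1))) ℝ) :
    ∃ P Q U V, M = assemble P Q U V := by
  have h := fromBlocks_toBlocks (M.submatrix (splitLast k) (splitLast k))
  exact ⟨_, _, _, _, by rw [assemble, h, submatrix_submatrix]; simp⟩

lemma assemble_inj : assemble P Q U V = assemble P' Q' U' V' ↔ P = P' ∧ Q = Q' ∧ U = U' ∧ V = V' := by
  rw [← fromBlocks_inj]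
  constructor
  · intro h
    simpa [assemble] using congrArg (fun M => M.submatrix (splitLast k) (splitLast k)) h
  · intro h
    rw [assemble, h, assemble]

lemma assemble_transpose : (assemble P Q U V)ᵀ = assemble Pᵀ Uᵀ Qᵀ Vᵀ := by
  rw [assemble, transpose_submatrix, fromBlocks_transpose, assemble]

lemma assemble_mul : assemble P Q U V * assemble P' Q' U' V' =
    assemble (P * P' + Q * U') (P * Q' + Q * V') (U * P' + V * U') (U * Q' + V * V') := by
  rw [assemble, assemble, submatrix_mul_equiv, fromBlocks_multiply, assemble]

lemma assemble_neg : -assemble P Q U V = assemble (-P) (-Q) (-U) (-V) := by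
  rw [assemble, assemble, ← fromBlocks_neg]; rfl

lemma det_assemble_zero₂₁ : (assemble P Q 0 V).det = P.det * V.det := by
  rw [assemble, det_submatrix_equiv_self, det_fromBlocks_zero₂₁]

lemma assemble_inl_inl (i j : Fin (2 * k)) :
    assemble P Q U V (splitLast k (Sum.inl i)) (splitLast k (Sum.inl j)) = P i j := by
  simp [assemble]

lemma assemble_inl_inr (i : Fin (2 * k)) (j : Fin 2) :
    assemble P Q U V (splitLast k (Sum.inl i)) (splitLast k (Sum.inr j)) = Q i j := by
  simp [assemble]

lemma assemble_inr_inl (i : Fin 2) (j : Fin (2 * k)) :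
    assemble P Q U V (splitLast k (Sum.inr i)) (splitLast k (Sum.inl j)) = U i j := by
  simp [assemble]

lemma assemble_inr_inr (i j : Fin 2) :
    assemble P Q U V (splitLast k (Sum.inr i)) (splitLast k (Sum.inr j)) = V i j := by
  simp [assemble]

lemma leadSub_assemble (j : ℕ) (hj : j ≤ 2 * k) (hj' : j ≤ 2 * (k + 1)) :
    leadSub (assemble P Q U V) j hj' = leadSub P j hj := by
  ext a b
  have h : ∀ a : Fin j, Fin.castLE hj' a = splitLast k (Sum.inl (Fin.castLE hj a)) := by
    intro a
    apply Fin.ext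
    rw [splitLast_inl]
    rfl
  simp only [leadSub, submatrix_apply]
  rw [h, h, assemble_inl_inl]

end assemble

lemma leadSub_self {m : ℕ} (M : Matrix (Fin m) (Fin m) ℝ) (h : m ≤ m) : leadSub M m h = M := rfl

/-! ### The skew-symmetric forms -/

lemma hatJ_succ (k : ℕ) : hatJ (k + 1) = assemble (hatJ k) 0 0 J2 := by
  ext i j
  obtain ⟨i, rfl⟩ := (splitLast k).surjective i
  obtain ⟨j, rfl⟩ := (splitLast k).surjective j
  rcases i with i | i <;> rcases j with j | j
  · rw [assemble_inl_inl]
    simp only [hatJ, of_apply, splitLast_inl]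
  · rw [assemble_inl_inr]
    simp only [hatJ, of_apply, splitLast_inl, splitLast_inr, Matrix.zero_apply]
    have := i.isLt
    rw [if_neg (by omega), if_neg (by omega)]
  · rw [assemble_inr_inl]
    simp only [hatJ, of_apply, splitLast_inl, splitLast_inr, Matrix.zero_apply]
    have := j.isLt
    rw [if_neg (by omega), if_neg (by omega)]
  · rw [assemble_inr_inr]
    simp only [hatJ, of_apply, splitLast_inr]
    fin_cases i <;> fin_cases j <;> simp [J2]

lemma hatJ_transpose (k : ℕ) : (hatJ k)ᵀ = -hatJ k := by
  ext i j
  simp only [hatJ, transpose_apply, of_apply, Matrix.neg_apply]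
  split_ifs <;> first | omega | simp

lemma PoissonJ_transpose (n : ℕ) : (PoissonJ n)ᵀ = -PoissonJ n := by
  ext i j
  have := i.isLt
  simp only [PoissonJ, transpose_apply, of_apply, Matrix.neg_apply]
  split_ifs <;> first | omega | simp

lemma det_hatJ (k : ℕ) : (hatJ k).det = 1 := by
  induction k with
  | zero => exact det_fin_zero
  | succ k ih => rw [hatJ_succ, det_assemble_zero₂₁, ih, J2, det_fin_two_of]; norm_num

/-! ### Admissible factors are invertible -/

lemma splitLast_idxA (k : ℕ) (j : Fin k) : idxA j.castSucc = splitLast k (Sum.inl (idxA j)) := by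
  apply Fin.ext; rw [splitLast_inl]; rfl

lemma splitLast_idxB (k : ℕ) (j : Fin k) : idxB j.castSucc = splitLast k (Sum.inl (idxB j)) := by
  apply Fin.ext; rw [splitLast_inl]; rfl

lemma idxA_last (k : ℕ) : idxA (Fin.last k) = splitLast k (Sum.inr 0) := by
  apply Fin.ext; rw [splitLast_inr]; rfl

lemma idxB_last (k : ℕ) : idxB (Fin.last k) = splitLast k (Sum.inr 1) := by
  apply Fin.ext; rw [splitLast_inr]; rfl

lemma admissibleR_assemble {k : ℕ} (P : Matrix (Fin (2 * k)) (Fin (2 * k)) ℝ)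
    (Q : Matrix (Fin (2 * k)) (Fin 2) ℝ) (U : Matrix (Fin 2) (Fin (2 * k)) ℝ)
    (V : Matrix (Fin 2) (Fin 2) ℝ) :
    AdmissibleR (k + 1) (assemble P Q U V) ↔ AdmissibleR k P ∧ U = 0 ∧ AdmissibleBlock V := by
  unfold AdmissibleR AdmissibleBlock
  rw [Fin.forall_fin_succ']
  simp only [splitLast_idxA, splitLast_idxB, idxA_last, idxB_last, assemble_inl_inl,
    assemble_inr_inr]
  constructor
  · rintro ⟨h1, h2, h3⟩
    refine ⟨⟨fun i j hij => ?_, h2⟩, ?_, h3⟩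
    · rw [← assemble_inl_inl P Q U V]
      exact h1 _ _ (by rwa [splitLast_inl, splitLast_inl])
    · ext i j
      rw [← assemble_inr_inl P Q U V]
      exact h1 _ _ (by rw [splitLast_inl, splitLast_inr]; have := j.isLt; omega)
  · rintro ⟨⟨h1, h2⟩, hU, h3⟩
    refine ⟨fun i j => ?_, h2, h3⟩
    obtain ⟨i, rfl⟩ := (splitLast k).surjective i
    obtain ⟨j, rfl⟩ := (splitLast k).surjective j
    rcases i with i | i <;> rcases j with j | j
    · rw [assemble_inl_inl, splitLast_inl, splitLast_inl]
      exact h1 i j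
    · rw [splitLast_inl, splitLast_inr]
      have := i.isLt
      omega
    · rw [assemble_inr_inl, hU]
      simp
    · rw [splitLast_inr, splitLast_inr]
      have := i.isLt
      omega

lemma AdmissibleBlock.det_ne_zero {T : Matrix (Fin 2) (Fin 2) ℝ} (h : AdmissibleBlock T) :
    T.det ≠ 0 := by
  obtain ⟨h1, h2, -, h4, h5⟩ := h
  have : T 1 1 ≠ 0 := by rw [← abs_pos, h5]; exact h4
  rw [det_fin_two, h1, zero_mul, sub_zero]
  exact mul_ne_zero h4.ne' this

lemma AdmissibleR.det_ne_zero {k : ℕ} {R : Matrix (Fin (2 * k)) (Fin (2 * k)) ℝ}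
    (h : AdmissibleR k R) : R.det ≠ 0 := by
  induction k with
  | zero => rw [show R.det = 1 from det_fin_zero]; exact one_ne_zero
  | succ k ih =>
    obtain ⟨P, Q, U, V, rfl⟩ := exists_assemble R
    obtain ⟨hP, rfl, hV⟩ := (admissibleR_assemble P Q U V).1 h
    rw [det_assemble_zero₂₁]
    exact mul_ne_zero (ih hP) hV.det_ne_zero

/-! ### Leading minors of a factored matrix -/

/-- The value of `Rᵀ (Ĵ ⊕ K) R` for a block upper triangular `R`. The free block `K` is taken to be
`J₂` for the factorization itself and `0` to rule out a vanishing last pivot. -/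
lemma congr_assemble {k : ℕ} (P : Matrix (Fin (2 * k)) (Fin (2 * k)) ℝ)
    (X : Matrix (Fin (2 * k)) (Fin 2) ℝ) (T K : Matrix (Fin 2) (Fin 2) ℝ) :
    (assemble P X 0 T)ᵀ * assemble (hatJ k) 0 0 K * assemble P X 0 T =
      assemble (Pᵀ * hatJ k * P) (Pᵀ * hatJ k * X) (Xᵀ * hatJ k * P)
        (Xᵀ * hatJ k * X + Tᵀ * K * T) := by
  rw [assemble_transpose, assemble_mul, assemble_mul]
  simp

lemma det_leadSub_ne_zero {k : ℕ} {R : Matrix (Fin (2 * k)) (Fin (2 * k)) ℝ}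
    (h : AdmissibleR k R) (j : ℕ) (hj : 2 * j ≤ 2 * k) :
    (leadSub (Rᵀ * hatJ k * R) (2 * j) hj).det ≠ 0 := by
  have key : ∀ {k : ℕ} {R : Matrix (Fin (2 * k)) (Fin (2 * k)) ℝ}, AdmissibleR k R →
      (Rᵀ * hatJ k * R).det ≠ 0 := fun h => by
    rw [det_mul, det_mul, det_transpose, det_hatJ, mul_one]
    exact mul_ne_zero h.det_ne_zero h.det_ne_zero
  induction k with
  | zero =>
    obtain rfl : j = 0 := by omega
    exact key h
  | succ k ih =>
    rcases Nat.lt_or_ge k j with hkj | hjk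
    · obtain rfl : j = k + 1 := by omega
      exact key h
    · obtain ⟨P, Q, U, V, rfl⟩ := exists_assemble R
      obtain ⟨hP, rfl, hV⟩ := (admissibleR_assemble P Q U V).1 h
      rw [hatJ_succ, congr_assemble, leadSub_assemble _ _ _ _ _ (by omega)]
      exact ih hP _

/-! ### The last diagonal block -/

lemma J2_congr (T : Matrix (Fin 2) (Fin 2) ℝ) : Tᵀ * J2 * T = T.det • J2 := by
  ext i j
  fin_cases i <;> fin_cases j <;>
    simp [J2, Matrix.mul_apply, Fin.sum_univ_two, det_fin_two] <;> ring

lemma skew_fin_two (D : Matrix (Fin 2) (Fin 2) ℝ) (h : Dᵀ = -D) : D = D 0 1 • J2 := by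
  have h' : ∀ i j, D j i = -D i j := fun i j => congrFun (congrFun h i) j
  ext i j
  have h00 := h' 0 0
  have h01 := h' 0 1
  have h11 := h' 1 1
  fin_cases i <;> fin_cases j <;> simp [J2] <;> linarith

lemma existsUnique_diagBlock (s : ℝ) (hs : s ≠ 0) :
    ∃! T : Matrix (Fin 2) (Fin 2) ℝ, AdmissibleBlock T ∧ T.det = s := by
  have habs : 0 < |s| := abs_pos.2 hs
  have hr : 0 < √|s| := Real.sqrt_pos.2 habs
  have hrr : √|s| * √|s| = |s| := Real.mul_self_sqrt habs.le
  -- The moduli are `√|s|`, and the sign of the second diagonal entry is that of `s`.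
  refine ⟨!![√|s|, 0; 0, s / √|s|], ⟨⟨by simp, by simp, ?_, by simpa using hs, ?_⟩, ?_⟩, ?_⟩
  · simp only [of_apply, cons_val', cons_val_zero, cons_val_one, cons_val_fin_one]
    rw [div_le_iff₀ hr, hrr]
    exact le_abs_self s
  · simp only [of_apply, cons_val', cons_val_zero, cons_val_one, cons_val_fin_one]
    rw [abs_div, abs_of_pos hr, div_eq_iff hr.ne', hrr]
  · rw [det_fin_two_of]
    field_simp
    ring
  · rintro T ⟨⟨h1, h2, -, h4, h5⟩, h6⟩
    rw [det_fin_two, h1, zero_mul, sub_zero] at h6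
    have ha : T 0 0 = √|s| := by
      rw [← h6, abs_mul, h5, abs_of_pos h4, Real.sqrt_mul_self h4.le]
    have hb : T 1 1 = s / √|s| := by
      rw [eq_div_iff hr.ne', ← ha, mul_comm, h6]
    ext i j
    fin_cases i <;> fin_cases j <;> simp [h1, h2, ha, hb]

/-! ### Existence and uniqueness of the factorization -/

/-- Existence and uniqueness of the Cholesky-like factorization of a skew-symmetric matrix with nonzero even leading minors. -/
lemma existsUnique_factor (k : ℕ) (M : Matrix (Fin (2 * k)) (Fin (2 * k)) ℝ) (hM : Mᵀ = -M)
    (hdet : ∀ j : ℕ, 1 ≤ j → ∀ hjk : 2 * j ≤ 2 * k, (leadSub M (2 * j) hjk).det ≠ 0) :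
    ∃! R : Matrix (Fin (2 * k)) (Fin (2 * k)) ℝ, AdmissibleR k R ∧ Rᵀ * hatJ k * R = M := by
  induction k with
  | zero =>
    refine ⟨1, ⟨⟨fun i => i.elim0, fun j => j.elim0⟩, ?_⟩, fun R _ => ?_⟩
    · ext i; exact i.elim0
    · ext i; exact i.elim0
  | succ k ih =>
    obtain ⟨M', B, C, D, rfl⟩ := exists_assemble M
    rw [assemble_transpose, assemble_neg, assemble_inj] at hM
    obtain ⟨hM', hC, -, hD⟩ := hM
    obtain ⟨P, ⟨hP, hPM⟩, hPu⟩ := ih M' hM' fun j hj hjk => by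
      rw [← leadSub_assemble M' B C D (2 * j) hjk (by omega)]
      exact hdet j hj _
    have hG : IsUnit (Pᵀ * hatJ k).det := by
      rw [det_mul, det_transpose, det_hatJ, mul_one]
      exact hP.det_ne_zero.isUnit
    obtain ⟨X, hX⟩ : ∃ X, Pᵀ * hatJ k * X = B :=
      ⟨(Pᵀ * hatJ k)⁻¹ * B, mul_nonsing_inv_cancel_left _ _ hG⟩
    have hXC : Xᵀ * hatJ k * P = C := by
      have h := congrArg transpose hX
      rw [transpose_mul, transpose_mul, transpose_transpose, hatJ_transpose, Matrix.neg_mul, Matrix.mul_neg,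
        ← Matrix.mul_assoc] at h
      rw [← transpose_transpose C, hC, transpose_neg, ← h, neg_neg]
    obtain ⟨s, hs⟩ : ∃ s : ℝ, D - Xᵀ * hatJ k * X = s • J2 := by
      refine ⟨_, skew_fin_two _ ?_⟩
      rw [transpose_sub, hD, transpose_mul, transpose_mul, transpose_transpose, hatJ_transpose,
        Matrix.neg_mul, Matrix.mul_neg, ← Matrix.mul_assoc]
      abel
    have hs0 : s ≠ 0 := by
      rintro rfl
      apply hdet (k + 1) (by omega) le_rfl
      rw [leadSub_self]
      -- If `s = 0`, then `M` is congruent to the singular matrix `Ĵ ⊕ 0`.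
      have h := congr_assemble P X 1 0
      rw [hPM, hX, hXC, mul_zero, zero_mul, add_zero, ← sub_eq_zero.1 (hs.trans (zero_smul _ _))]
        at h
      rw [← h, det_mul, det_mul, det_assemble_zero₂₁ (hatJ k) 0 0]
      simp
    obtain ⟨T, ⟨hT, hTs⟩, hTu⟩ := existsUnique_diagBlock s hs0
    refine ⟨assemble P X 0 T, ⟨(admissibleR_assemble _ _ _ _).2 ⟨hP, rfl, hT⟩, ?_⟩, ?_⟩
    · rw [hatJ_succ, congr_assemble, hPM, hX, hXC, J2_congr, hTs, ← hs]
      congr 1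
      abel
    · rintro R ⟨hR, hRM⟩
      obtain ⟨P₁, X₁, U₁, T₁, rfl⟩ := exists_assemble R
      obtain ⟨hP₁, rfl, hT₁⟩ := (admissibleR_assemble _ _ _ _).1 hR
      rw [hatJ_succ, congr_assemble, assemble_inj] at hRM
      obtain ⟨h11, h12, -, h22⟩ := hRM
      obtain rfl := hPu P₁ ⟨hP₁, h11⟩
      obtain rfl : X₁ = X := by
        rw [← nonsing_inv_mul_cancel_left _ X₁ hG, h12, ← hX, nonsing_inv_mul_cancel_left _ X hG]
      have hd : T₁.det • J2 = s • J2 := by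
        rw [← hs, ← h22, J2_congr]
        abel
      have hd' : T₁.det = s := by simpa [J2] using congrFun (congrFun hd 0) 1
      rw [hTu T₁ ⟨hT₁, hd'⟩]

/-- **Theorem (existence and uniqueness of the PSPS decomposition).**
Let `A ∈ ℝ^{2n×2k}` have full column rank. A decomposition `A = Ŝ R̂` — with `Ŝ` a perfect
shuffle permuted symplectic matrix (`Ŝᵀ J_{2n} Ŝ = Ĵ_{2k}`) and `R̂` block upper triangular
with `2×2` blocks whose diagonal blocks are diagonal with diagonal entries ordered
nonincreasingly and having the same positive absolute value — exists and is unique if and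
only if all leading principal minors of even dimension of `Aᵀ J_{2n} A` are nonzero. -/
theorem psps_decomposition_existsUnique_iff
    (k n : ℕ)
    (A : Matrix (Fin (2 * n)) (Fin (2 * k)) ℝ)
    (hrank : A.rank = 2 * k) :
    (∃! SR : Matrix (Fin (2 * n)) (Fin (2 * k)) ℝ × Matrix (Fin (2 * k)) (Fin (2 * k)) ℝ,
      SR.1ᵀ * PoissonJ n * SR.1 = hatJ k ∧
      (∀ i j : Fin (2 * k), (j : ℕ) / 2 < (i : ℕ) / 2 → SR.2 i j = 0) ∧
      (∀ j : Fin k,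
        SR.2 (idxA j) (idxB j) = 0 ∧
        SR.2 (idxB j) (idxA j) = 0 ∧
        SR.2 (idxB j) (idxB j) ≤ SR.2 (idxA j) (idxA j) ∧
        0 < SR.2 (idxA j) (idxA j) ∧
        |SR.2 (idxB j) (idxB j)| = SR.2 (idxA j) (idxA j)) ∧
      A = SR.1 * SR.2) ↔
      (∀ j : ℕ, 1 ≤ j → ∀ hjk : j ≤ k,
        (leadSub (Aᵀ * PoissonJ n * A) (2 * j) (by omega)).det ≠ 0) := by
  have skew : (Aᵀ * PoissonJ n * A)ᵀ = -(Aᵀ * PoissonJ n * A) := by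
    rw [transpose_mul, transpose_mul, transpose_transpose, PoissonJ_transpose, Matrix.neg_mul, Matrix.mul_neg,
      ← Matrix.mul_assoc]
  have gram : ∀ (S : Matrix (Fin (2 * n)) (Fin (2 * k)) ℝ) (R : Matrix (Fin (2 * k)) (Fin (2 * k)) ℝ),
      (S * R)ᵀ * PoissonJ n * (S * R) = Rᵀ * (Sᵀ * PoissonJ n * S) * R := fun S R => by
    simp only [transpose_mul, Matrix.mul_assoc]
  constructor
  · rintro ⟨⟨S, R⟩, ⟨hS, hR1, hR2, hA⟩, -⟩ j - hjk
    simp only at hS hR1 hR2 hA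
    have hM : Aᵀ * PoissonJ n * A = Rᵀ * hatJ k * R := by rw [hA, gram, hS]
    rw [hM]
    exact det_leadSub_ne_zero ⟨hR1, hR2⟩ j _
  · intro hdet
    obtain ⟨R, ⟨hR, hRM⟩, hRu⟩ := existsUnique_factor k (Aᵀ * PoissonJ n * A) skew
      fun j hj hjk => hdet j hj (by omega)
    have hu : IsUnit R.det := hR.det_ne_zero.isUnit
    have hut : IsUnit Rᵀ.det := by rwa [det_transpose]
    refine ⟨(A * R⁻¹, R), ⟨?_, hR.1, hR.2, (nonsing_inv_mul_cancel_right _ A hu).symm⟩, ?_⟩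
    · change (A * R⁻¹)ᵀ * PoissonJ n * (A * R⁻¹) = hatJ k
      rw [gram, ← hRM, transpose_nonsing_inv, Matrix.mul_assoc Rᵀ,
        nonsing_inv_mul_cancel_left _ _ hut, mul_nonsing_inv_cancel_right _ _ hu]
    · rintro ⟨S, R₁⟩ ⟨hS, hR1, hR2, hA⟩
      simp only at hS hR1 hR2 hA
      obtain rfl : R₁ = R := hRu R₁ ⟨⟨hR1, hR2⟩, by rw [hA, gram, hS]⟩
      rw [hA, mul_nonsing_inv_cancel_right _ S hu]
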